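/- There exists an absolute constant C > 0 such that for every ν ∈ ℝⁿ \ {0}, every R > 0, and every w ∈ C_c^∞(ℝ × ℝⁿ) supported in ℝ × {x : |ν·x| < |ν|R}, one has |ν| ‖w‖_{L²(ℝ×ℝⁿ)} ≤ C R ‖(i∂_t + Δ + 2ν·∇)w‖_{L²(ℝ×ℝⁿ)}. -/

import Mathlib

open MeasureTheory Complex ComplexConjugate
open scoped RealInnerProductSpace

noncomputable section

/-- Spatial Laplacian of a complex-valued function on Euclidean space. -/
def spatialLap {n : ℕ} (f : EuclideanSpace ℝ (Fin n) → ℂ) (x : EuclideanSpace ℝ (Fin n)) : ℂ :=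
  ∑ i : Fin n,
    fderiv ℝ (fun y => fderiv ℝ f y (EuclideanSpace.single i (1 : ℝ))) x
      (EuclideanSpace.single i (1 : ℝ))

/-- The Schrödinger operator `i ∂ₜ + Δ`. -/
def schrodOp {n : ℕ} (u : ℝ × EuclideanSpace ℝ (Fin n) → ℂ)
    (p : ℝ × EuclideanSpace ℝ (Fin n)) : ℂ :=
  Complex.I * deriv (fun s => u (s, p.2)) p.1 + spatialLap (fun x => u (p.1, x)) p.2

section CompactSupport

variable {X : Type*} [TopologicalSpace X] [MeasurableSpace X] [OpensMeasurableSpace X]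
  {μ : Measure X} [IsFiniteMeasureOnCompacts μ] {f g : X → ℂ}

theorem integrable_inner_of_hasCompactSupport (hf : Continuous f) (hg : Continuous g)
    (hfc : HasCompactSupport f) : Integrable (fun p => inner ℝ (f p) (g p)) μ :=
  (hf.inner hg).integrable_of_hasCompactSupport <|
    hfc.mono fun p hp => by
      contrapose! hp
      simp_all

theorem integrable_norm_sq_of_hasCompactSupport (hf : Continuous f)
    (hfc : HasCompactSupport f) : Integrable (fun p => ‖f p‖ ^ 2) μ := by
  simpa using integrable_inner_of_hasCompactSupport (μ := μ) hf hf hfc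

end CompactSupport

/-- The derivative of `f` in the fixed direction `v`, as a function of the base point. -/
def dirDeriv {E : Type*} [NormedAddCommGroup E] [NormedSpace ℝ E] (v : E) (f : E → ℂ) : E → ℂ :=
  fun p => fderiv ℝ f p v

section DirDeriv

variable {E : Type*} [NormedAddCommGroup E] [NormedSpace ℝ E] {f g w : E → ℂ}

theorem contDiff_dirDeriv (hf : ContDiff ℝ (⊤ : ℕ∞) f) (v : E) :
    ContDiff ℝ (⊤ : ℕ∞) (dirDeriv v f) :=
  (hf.fderiv_right (m := (⊤ : ℕ∞)) (by simp)).clm_apply contDiff_const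

theorem hasCompactSupport_dirDeriv (hf : HasCompactSupport f) (v : E) :
    HasCompactSupport (dirDeriv v f) :=
  hf.fderiv_apply (𝕜 := ℝ) v

theorem dirDeriv_comm (hf : ContDiff ℝ (⊤ : ℕ∞) f) (u v : E) :
    dirDeriv u (dirDeriv v f) = dirDeriv v (dirDeriv u f) := by
  have hd : Differentiable ℝ (fderiv ℝ f) :=
    (hf.fderiv_right (m := (⊤ : ℕ∞)) (by simp)).differentiable (by simp)
  have key (a b : E) (p : E) : dirDeriv a (dirDeriv b f) p = fderiv ℝ (fderiv ℝ f) p a b := by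
    unfold dirDeriv
    rw [fderiv_clm_apply (hd p) (differentiableAt_const b)]
    simp
  funext p
  rw [key, key]
  have hs : IsSymmSndFDerivAt ℝ f p := hf.contDiffAt.isSymmSndFDerivAt (by
    rw [minSmoothness_of_isRCLikeNormedField]
    exact WithTop.coe_le_coe.2 le_top)
  exact hs u v

theorem dirDeriv_const_mul (hf : ContDiff ℝ (⊤ : ℕ∞) f) (c : ℂ) (v : E) :
    dirDeriv v (fun p => c * f p) = fun p => c * dirDeriv v f p := by
  funext p
  unfold dirDeriv
  rw [fderiv_const_mul (hf.differentiable (by simp) p)]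
  simp

variable [FiniteDimensional ℝ E] [MeasurableSpace E] [BorelSpace E] {μ : Measure E}
  [μ.IsAddHaarMeasure]

/-- Directional derivatives are antisymmetric for the real `L²` inner product. -/
theorem integral_inner_dirDeriv (hf : ContDiff ℝ (⊤ : ℕ∞) f) (hg : ContDiff ℝ (⊤ : ℕ∞) g)
    (hfc : HasCompactSupport f) (v : E) :
    ∫ p, inner ℝ (f p) (dirDeriv v g p) ∂μ = -∫ p, inner ℝ (dirDeriv v f p) (g p) ∂μ :=
  integral_bilinear_fderiv_right_eq_neg_left_of_integrable (B := innerSL ℝ) (μ := μ) (v := v)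
    (integrable_inner_of_hasCompactSupport (contDiff_dirDeriv hf v).continuous hg.continuous
      (hasCompactSupport_dirDeriv hfc v))
    (integrable_inner_of_hasCompactSupport hf.continuous (contDiff_dirDeriv hg v).continuous hfc)
    (integrable_inner_of_hasCompactSupport hf.continuous hg.continuous hfc)
    (fun p _ => hf.differentiable (by simp) p) (fun p _ => hg.differentiable (by simp) p)

theorem integral_inner_dirDeriv_dirDeriv_self (hw : ContDiff ℝ (⊤ : ℕ∞) w)
    (hwc : HasCompactSupport w) (u v : E) :
    ∫ p, inner ℝ (dirDeriv u (dirDeriv u w) p) (dirDeriv v w p) ∂μ = 0 := by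
  have hu := contDiff_dirDeriv hw u
  have hv := contDiff_dirDeriv hw v
  have huc := hasCompactSupport_dirDeriv hwc u
  have h1 := integral_inner_dirDeriv (μ := μ) hu hv huc u
  have h2 := integral_inner_dirDeriv (μ := μ) hu hu huc v
  rw [dirDeriv_comm hw u v] at h1
  simp only [real_inner_comm (dirDeriv u w _) (dirDeriv v (dirDeriv u w) _)] at h2
  linarith

theorem inner_I_mul_left (a b : ℂ) : inner ℝ (I * a) b = -inner ℝ a (I * b) := by
  simp [Complex.inner]
  ring

theorem integral_inner_I_mul_dirDeriv (hw : ContDiff ℝ (⊤ : ℕ∞) w)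
    (hwc : HasCompactSupport w) (u v : E) :
    ∫ p, inner ℝ (I * dirDeriv u w p) (dirDeriv v w p) ∂μ = 0 := by
  have hIw : ContDiff ℝ (⊤ : ℕ∞) (fun p => I * w p) := contDiff_const.mul hw
  have hIc : HasCompactSupport (fun p => I * w p) := hwc.mul_left (f := fun _ => I)
  have h1 := integral_inner_dirDeriv (μ := μ) hIw (contDiff_dirDeriv hw v) hIc u
  have h2 := integral_inner_dirDeriv (μ := μ) hIw (contDiff_dirDeriv hw u) hIc v
  rw [dirDeriv_const_mul hw, dirDeriv_comm hw u v] at h1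
  rw [dirDeriv_const_mul hw] at h2
  have h3 : ∫ p, inner ℝ (I * dirDeriv v w p) (dirDeriv u w p) ∂μ
      = -∫ p, inner ℝ (I * dirDeriv u w p) (dirDeriv v w p) ∂μ := by
    rw [← integral_neg]
    congr 1 with p
    rw [inner_I_mul_left, real_inner_comm]
  linarith

/-- Directional Poincaré inequality in the slab `{|φ| ≤ M}`. -/
theorem sq_mul_integral_norm_sq_le (hw : ContDiff ℝ (⊤ : ℕ∞) w) (hwc : HasCompactSupport w)
    (φ : E →L[ℝ] ℝ) (v : E) (M : ℝ) (hφ : ∀ p, w p ≠ 0 → |φ p| ≤ M) (hv : 0 < φ v) :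
    φ v ^ 2 * ∫ p, ‖w p‖ ^ 2 ∂μ ≤ 4 * M ^ 2 * ∫ p, ‖dirDeriv v w p‖ ^ 2 ∂μ := by
  have hφw : ContDiff ℝ (⊤ : ℕ∞) (fun p => φ p • w p) := φ.contDiff.smul hw
  have hDw := contDiff_dirDeriv hw v
  have hφc : HasCompactSupport (fun p => φ p • w p) := hwc.smul_left (f := φ)
  have hder (p : E) : dirDeriv v (fun p => φ p • w p) p = φ p • dirDeriv v w p + φ v • w p := by
    unfold dirDeriv
    rw [fderiv_fun_smul φ.differentiableAt (hw.differentiable (by simp) p)]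
    simp
  have hi0 := integrable_inner_of_hasCompactSupport (μ := μ) hφw.continuous hDw.continuous hφc
  have hi1 := integrable_norm_sq_of_hasCompactSupport (μ := μ) hw.continuous hwc
  have hi2 := integrable_norm_sq_of_hasCompactSupport (μ := μ) hDw.continuous
    (hasCompactSupport_dirDeriv hwc v)
  have ibp := integral_inner_dirDeriv (μ := μ) hφw hw hφc v
  have hsplit : ∫ p, inner ℝ (dirDeriv v (fun p => φ p • w p) p) (w p) ∂μ
      = (∫ p, inner ℝ (φ p • w p) (dirDeriv v w p) ∂μ) + φ v * ∫ p, ‖w p‖ ^ 2 ∂μ := by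
    rw [← integral_const_mul, ← integral_add hi0 (hi1.const_mul _)]
    congr 1 with p
    rw [hder, inner_add_left, real_inner_smul_left, real_inner_smul_left, real_inner_smul_left,
      real_inner_self_eq_norm_sq, real_inner_comm]
  have hmono : ∫ p, -(2 * φ v * inner ℝ (φ p • w p) (dirDeriv v w p)) ∂μ
      ≤ ∫ p, (φ v ^ 2 / 2 * ‖w p‖ ^ 2 + 2 * M ^ 2 * ‖dirDeriv v w p‖ ^ 2) ∂μ := by
    refine integral_mono (hi0.const_mul _).neg ((hi1.const_mul _).add (hi2.const_mul _)) fun p => ?_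
    by_cases hp : w p = 0
    · simp only [hp, smul_zero, inner_zero_left, mul_zero, neg_zero, norm_zero]
      positivity
    have h1 := neg_le_of_abs_le (abs_real_inner_le_norm (φ p • w p) (dirDeriv v w p))
    rw [norm_smul, Real.norm_eq_abs] at h1
    have h2 : |φ p| * (‖w p‖ * ‖dirDeriv v w p‖) ≤ M * (‖w p‖ * ‖dirDeriv v w p‖) :=
      mul_le_mul_of_nonneg_right (hφ p hp) (by positivity)
    have h3 : -inner ℝ (φ p • w p) (dirDeriv v w p) ≤ M * (‖w p‖ * ‖dirDeriv v w p‖) := by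
      linarith
    have h4 := mul_le_mul_of_nonneg_left h3 hv.le
    simp only
    nlinarith [sq_nonneg (φ v * ‖w p‖ - 2 * M * ‖dirDeriv v w p‖)]
  rw [integral_neg, integral_const_mul, integral_add (hi1.const_mul _) (hi2.const_mul _),
    integral_const_mul, integral_const_mul] at hmono
  have hcross : 2 * ∫ p, inner ℝ (φ p • w p) (dirDeriv v w p) ∂μ = -(φ v * ∫ p, ‖w p‖ ^ 2 ∂μ) := by
    linarith
  nlinarith

/-- Half of the Plancherel identity: dropping the term `‖(I ∂_τ + ∑ i, ∂_{e i}²) w‖²`. -/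
theorem four_mul_integral_norm_dirDeriv_sq_le {ι : Type*} [Fintype ι]
    (hw : ContDiff ℝ (⊤ : ℕ∞) w) (hwc : HasCompactSupport w) (τ v : E) (e : ι → E) :
    4 * ∫ p, ‖dirDeriv v w p‖ ^ 2 ∂μ ≤
      ∫ p, ‖I * dirDeriv τ w p + ∑ i, dirDeriv (e i) (dirDeriv (e i) w) p
        + 2 * dirDeriv v w p‖ ^ 2 ∂μ := by
  have hD := contDiff_dirDeriv hw
  have hDc := hasCompactSupport_dirDeriv hwc
  set S : E → ℂ := fun p => I * dirDeriv τ w p + ∑ i, dirDeriv (e i) (dirDeriv (e i) w) p with hS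
  have hSd : Continuous S := by
    have := fun i => (contDiff_dirDeriv (hD (e i)) (e i)).continuous
    have := (hD τ).continuous
    fun_prop
  have hiτ : Integrable (fun p => inner ℝ (I * dirDeriv τ w p) (dirDeriv v w p)) μ :=
    integrable_inner_of_hasCompactSupport
      (continuous_const.mul (hD τ).continuous) (hD v).continuous
      ((hDc τ).mul_left (f := fun _ => I))
  have hie := fun i => integrable_inner_of_hasCompactSupport (μ := μ)
    (contDiff_dirDeriv (hD (e i)) (e i)).continuous (hD v).continuous
    (hasCompactSupport_dirDeriv (hDc (e i)) (e i))
  have hcross : ∫ p, inner ℝ (S p) (dirDeriv v w p) ∂μ = 0 := by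
    simp only [hS, inner_add_left, sum_inner]
    rw [integral_add hiτ (integrable_finsetSum _ fun i _ => hie i),
      integral_finsetSum _ fun i _ => hie i, integral_inner_I_mul_dirDeriv hw hwc]
    simp only [integral_inner_dirDeriv_dirDeriv_self hw hwc, Finset.sum_const_zero, add_zero]
  have hSc : HasCompactSupport S := by
    refine ((hDc τ).mul_left (f := fun _ => I)).add ?_
    have h : HasCompactSupport (∑ i, dirDeriv (e i) (dirDeriv (e i) w)) :=
      Finset.sum_induction _ HasCompactSupport (fun _ _ ha hb => ha.add hb) HasCompactSupport.zero
        fun i _ => hasCompactSupport_dirDeriv (hDc (e i)) (e i)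
    rwa [show ∑ i, dirDeriv (e i) (dirDeriv (e i) w)
      = fun p => ∑ i, dirDeriv (e i) (dirDeriv (e i) w) p by ext p; simp] at h
  have hiS := integrable_norm_sq_of_hasCompactSupport (μ := μ) hSd hSc
  have hiv := integrable_norm_sq_of_hasCompactSupport (μ := μ) (hD v).continuous (hDc v)
  have hic := integrable_inner_of_hasCompactSupport (μ := μ) hSd (hD v).continuous hSc
  have hexp : ∫ p, ‖S p + 2 * dirDeriv v w p‖ ^ 2 ∂μ
      = ∫ p, (‖S p‖ ^ 2 + 4 * inner ℝ (S p) (dirDeriv v w p) + 4 * ‖dirDeriv v w p‖ ^ 2) ∂μ := by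
    congr 1 with p
    have h2 : (2 : ℂ) * dirDeriv v w p = (2 : ℝ) • dirDeriv v w p := by
      rw [Complex.real_smul]; norm_num
    rw [norm_add_sq_real, h2, real_inner_smul_right, norm_smul, mul_pow]
    norm_num
    ring
  rw [hexp, integral_add (by exact hiS.add (hic.const_mul _)) (hiv.const_mul _),
    integral_add hiS (hic.const_mul _), integral_const_mul, integral_const_mul, hcross]
  have : 0 ≤ ∫ p, ‖S p‖ ^ 2 ∂μ := integral_nonneg fun p => by positivity
  linarith

end DirDeriv

section Slices

variable {F : Type*} [NormedAddCommGroup F] [NormedSpace ℝ F] {f : ℝ × F → ℂ}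

theorem fderiv_slice_right (hf : ContDiff ℝ (⊤ : ℕ∞) f) (t : ℝ) (x v : F) :
    fderiv ℝ (fun y => f (t, y)) x v = dirDeriv (0, v) f (t, x) := by
  have h := (hf.differentiable (by simp) (t, x)).hasFDerivAt.comp x (hasFDerivAt_prodMk_right t x)
  rw [show (fun y => f (t, y)) = f ∘ fun y => (t, y) from rfl, h.fderiv]
  simp [dirDeriv]

theorem deriv_slice_left (hf : ContDiff ℝ (⊤ : ℕ∞) f) (t : ℝ) (x : F) :
    deriv (fun s => f (s, x)) t = dirDeriv (1, 0) f (t, x) := by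
  have h := (hf.differentiable (by simp) (t, x)).hasFDerivAt.comp t (hasFDerivAt_prodMk_left (𝕜 := ℝ) t x)
  rw [show (fun s => f (s, x)) = f ∘ fun s => (s, x) from rfl, h.hasDerivAt.deriv]
  simp [dirDeriv]

end Slices

theorem schrodOp_eq_dirDeriv {n : ℕ} {w : ℝ × EuclideanSpace ℝ (Fin n) → ℂ}
    (hw : ContDiff ℝ (⊤ : ℕ∞) w) (p : ℝ × EuclideanSpace ℝ (Fin n)) :
    schrodOp w p = I * dirDeriv (1, 0) w p
      + ∑ i : Fin n, dirDeriv (0, EuclideanSpace.single i (1 : ℝ))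
          (dirDeriv (0, EuclideanSpace.single i (1 : ℝ)) w) p := by
  simp only [schrodOp, spatialLap, deriv_slice_left hw, fderiv_slice_right hw,
    fderiv_slice_right (contDiff_dirDeriv hw _)]

/-- there is an absolute constant `C > 0` such that
`|ν| ‖w‖_{L²} ≤ C R ‖(i∂ₜ + Δ + 2ν·∇)w‖_{L²}` for smooth compactly supported `w`
supported in the slab `ℝ × {x : |ν·x| < |ν| R}`. -/
theorem stmt7 :
    ∃ C : ℝ, 0 < C ∧
      ∀ (n : ℕ) (ν : EuclideanSpace ℝ (Fin n)), ν ≠ 0 → ∀ R : ℝ, 0 < R →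
        ∀ w : ℝ × EuclideanSpace ℝ (Fin n) → ℂ, ContDiff ℝ (⊤ : ℕ∞) w → HasCompactSupport w →
          (Function.support w ⊆ {p : ℝ × EuclideanSpace ℝ (Fin n) | |(⟪ν, p.2⟫ : ℝ)| < ‖ν‖ * R}) →
          ‖ν‖ * Real.sqrt (∫ p : ℝ × EuclideanSpace ℝ (Fin n), ‖w p‖ ^ 2)
            ≤ C * R * Real.sqrt
                (∫ p : ℝ × EuclideanSpace ℝ (Fin n),
                  ‖schrodOp w p + 2 * fderiv ℝ (fun x => w (p.1, x)) p.2 ν‖ ^ 2) := by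
  refine ⟨1, one_pos, fun n ν hν R hR w hw hwc hsupp => ?_⟩
  have : (volume : Measure (ℝ × EuclideanSpace ℝ (Fin n))).IsAddHaarMeasure := by
    rw [Measure.volume_eq_prod]
    infer_instance
  have hν0 : 0 < ‖ν‖ := norm_pos_iff.2 hν
  set φ : ℝ × EuclideanSpace ℝ (Fin n) →L[ℝ] ℝ :=
    (innerSL ℝ ν).comp (ContinuousLinearMap.snd ℝ ℝ (EuclideanSpace ℝ (Fin n))) with hφ
  have hφv : φ (0, ν) = ‖ν‖ ^ 2 := by simp [hφ]
  have poincare := sq_mul_integral_norm_sq_le (μ := volume) hw hwc φ (0, ν) (‖ν‖ * R)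
    (fun p hp => (hsupp hp).le) (by rw [hφv]; positivity)
  have plancherel := four_mul_integral_norm_dirDeriv_sq_le (μ := volume) hw hwc (1, 0) (0, ν)
    fun i : Fin n => (0, EuclideanSpace.single i (1 : ℝ))
  simp only [schrodOp_eq_dirDeriv hw, fderiv_slice_right hw]
  rw [hφv] at poincare
  set A := ∫ p, ‖w p‖ ^ 2
  set B := ∫ p, ‖dirDeriv (0, ν) w p‖ ^ 2
  have hAB : ‖ν‖ ^ 2 * A ≤ R ^ 2 * (4 * B) := by
    refine le_of_mul_le_mul_left ?_ (pow_pos hν0 2)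
    linarith
  have key := hAB.trans (mul_le_mul_of_nonneg_left plancherel (sq_nonneg R))
  have := Real.sqrt_le_sqrt key
  rwa [Real.sqrt_mul (sq_nonneg _), Real.sqrt_mul (sq_nonneg _), Real.sqrt_sq hν0.le,
    Real.sqrt_sq hR.le, ← one_mul R] at this

end
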